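/- If K: X × X → ℝ is a positive semidefinite kernel, then the kernel K̃(x,z) = exp(K(x,z)) is also positive semidefinite. -/

import Mathlib

def IsPSDKernel {X : Type*} (K : X → X → ℝ) : Prop :=
  (∀ x z, K x z = K z x) ∧
  ∀ (n : ℕ) (x : Fin n → X) (a : Fin n → ℝ),
    0 ≤ ∑ i, ∑ j, a i * a j * K (x i) (x j)

lemma isPSDKernel_iff_matrix {X : Type*} (K : X → X → ℝ) (hs : ∀ x z, K x z = K z x) :
    IsPSDKernel K ↔ ∀ (n : ℕ) (x : Fin n → X),
      (Matrix.of fun i j => K (x i) (x j)).PosSemidef := by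
  have key : ∀ (n : ℕ) (x : Fin n → X) (a : Fin n → ℝ),
      dotProduct (star a) (Matrix.mulVec (Matrix.of fun i j => K (x i) (x j)) a)
        = ∑ i, ∑ j, a i * a j * K (x i) (x j) := by
    intro n x a
    simp only [dotProduct, Matrix.mulVec, Finset.mul_sum]
    refine Finset.sum_congr rfl fun i _ => Finset.sum_congr rfl fun j _ => ?_
    simp
    ring
  constructor
  · intro h n x
    refine Matrix.PosSemidef.of_dotProduct_mulVec_nonneg ?_ ?_
    · ext i j
      simp [hs (x j) (x i)]
    · intro a
      rw [key]
      exact h.2 n x a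
  · intro h
    refine ⟨hs, fun n x a => ?_⟩
    rw [← key]
    exact (h n x).dotProduct_mulVec_nonneg a

lemma isPSDKernel_mul {X : Type*} {K L : X → X → ℝ} (hK : IsPSDKernel K) (hL : IsPSDKernel L) :
    IsPSDKernel (fun x z => K x z * L x z) := by
  rw [isPSDKernel_iff_matrix _ (fun x z => by rw [hK.1, hL.1])]
  intro n x
  exact ((isPSDKernel_iff_matrix K hK.1).1 hK n x).hadamard
    ((isPSDKernel_iff_matrix L hL.1).1 hL n x)

lemma isPSDKernel_pow {X : Type*} {K : X → X → ℝ} (hK : IsPSDKernel K) (k : ℕ) :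
    IsPSDKernel (fun x z => K x z ^ k) := by
  induction k with
  | zero =>
    refine ⟨fun _ _ => by simp, fun n x a => ?_⟩
    simp only [pow_zero, mul_one]
    rw [← Finset.sum_mul_sum]
    exact mul_self_nonneg _
  | succ k ih =>
    simp only [pow_succ]
    exact isPSDKernel_mul ih hK

theorem exp_psd_kernel {X : Type*} (K : X → X → ℝ) (hK : IsPSDKernel K) :
    IsPSDKernel (fun x z => Real.exp (K x z)) := by
  refine ⟨fun x z => by simp only [hK.1 x z], fun n x a => ?_⟩
  have hs : HasSum (fun k : ℕ => ∑ i, ∑ j, a i * a j * (K (x i) (x j) ^ k / (k.factorial : ℝ)))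
      (∑ i, ∑ j, a i * a j * Real.exp (K (x i) (x j))) := by
    refine hasSum_sum fun i _ => hasSum_sum fun j _ => HasSum.mul_left _ ?_
    rw [Real.exp_eq_exp_ℝ]
    exact NormedSpace.expSeries_div_hasSum_exp _
  refine hs.nonneg fun k => ?_
  have h := (isPSDKernel_pow hK k).2 n x a
  have : ∑ i, ∑ j, a i * a j * (K (x i) (x j) ^ k / (k.factorial : ℝ))
      = (∑ i, ∑ j, a i * a j * K (x i) (x j) ^ k) / (k.factorial : ℝ) := by
    simp only [Finset.sum_div, mul_div_assoc]
  rw [this]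
  exact div_nonneg h (by positivity)
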